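/- There exist absolute constants C₀, C₁ > 0 such that the following holds: let ξ ∈ (0,1], let G be a d-regular graph on n vertices with d = n^ξ, and suppose G satisfies the δ-small-set α-bipartite density condition for some α ∈ (√d, d] with α ≤ ξ²·d/(log d)² and some δ ∈ (0,1] with δ ≥ C₀·α/d. Set c := 1 − (log α)/(log d) (so that α = d^{1−c}). Then for every probability distribution p₀ on V and every integer t ≥ 4/(c·ξ) + 1, ‖P^t p₀‖₂² ≤ C_δ/n + C₁ / n^{1 + cξ/4}, where C_δ := δ + (5/4)·(1−δ). -/

import Mathlib

open Finset

/-- The random-walk matrix `P = A/d` of a graph `G` (intended: `d`-regular). -/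
noncomputable def walkMatrix {n : ℕ} (G : SimpleGraph (Fin n)) [DecidableRel G.Adj]
    (d : ℕ) : Matrix (Fin n) (Fin n) ℝ :=
  (d : ℝ)⁻¹ • G.adjMatrix ℝ

/-- `p` is a probability distribution on `Fin n`. -/
def IsProbDist {n : ℕ} (p : Fin n → ℝ) : Prop :=
  (∀ v, 0 ≤ p v) ∧ ∑ v, p v = 1

/-- Total variation distance of `p` from the uniform distribution on `Fin n`. -/
noncomputable def tvFromUniform {n : ℕ} (p : Fin n → ℝ) : ℝ :=
  (1 / 2) * ∑ v, |p v - 1 / (n : ℝ)|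

/-- `d_TV(t)`: worst-case total variation distance from uniform after `t` steps
of the random walk. -/
noncomputable def dTV {n : ℕ} (G : SimpleGraph (Fin n)) [DecidableRel G.Adj]
    (d t : ℕ) : ℝ :=
  sSup {x : ℝ | ∃ p : Fin n → ℝ, IsProbDist p ∧
    x = tvFromUniform ((walkMatrix G d ^ t).mulVec p)}

/-- The `ε`-mixing time `τ_ε(P)`. -/
noncomputable def mixingTime {n : ℕ} (G : SimpleGraph (Fin n)) [DecidableRel G.Adj]
    (d : ℕ) (ε : ℝ) : ℕ :=
  sInf {t : ℕ | dTV G d t ≤ ε}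

/-- `|E(S,T)|`: the number of ordered edges `(u,v)` with `u ∈ S`, `v ∈ T`, `uv ∈ E`. -/
def bipCount {n : ℕ} (G : SimpleGraph (Fin n)) [DecidableRel G.Adj]
    (S T : Finset (Fin n)) : ℕ :=
  ((S ×ˢ T).filter (fun e => G.Adj e.1 e.2)).card

/-- The `α`-bipartite density condition. -/
def BipDensity {n : ℕ} (G : SimpleGraph (Fin n)) [DecidableRel G.Adj]
    (d : ℕ) (α : ℝ) : Prop :=
  ∀ S T : Finset (Fin n),
    (bipCount G S T : ℝ) ≤ d * S.card * T.card / n + α * Real.sqrt (S.card * T.card)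

/-- The `δ`-small-set `α`-bipartite density condition. -/
def SmallSetBipDensity {n : ℕ} (G : SimpleGraph (Fin n)) [DecidableRel G.Adj]
    (d : ℕ) (α δ : ℝ) : Prop :=
  ∀ S T : Finset (Fin n), (S.card : ℝ) ≤ δ * n → (T.card : ℝ) ≤ δ * n →
    (bipCount G S T : ℝ) ≤ d * S.card * T.card / n + α * Real.sqrt (S.card * T.card)

/-
Pairing the density condition with the indicator functions of the level sets of a function shows
that it controls the bilinear form of `P` on all nonnegative functions: in the decreasing
rearrangement, Cauchy-Schwarz against the increments `√(k + 1) - √k ≤ 1 / √(k + 1)` costs only a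
harmonic sum, and sets larger than the threshold `δ n` are cut into small pieces, which costs
`‖f‖₁ / √(δ n)`. Hence one step of the walk maps `‖p‖₂²` to at most `(C_δ + ε) / n + ε ‖p‖₂²`,
where `ε = (α / d) ^ (1 / 4) = n ^ (-c ξ / 4)`: two of the four factors `ε` of `α / d` absorb the
harmonic sum. Iterating gives `(C_δ + O(ε)) / n + ε ^ t`, and `ε ^ t ≤ ε / n` for the stated `t`.
-/

section Rearrangement

theorem exists_equiv_fin_antitone {ι α : Type*} [Fintype ι] [LinearOrder α] (f : ι → α) :
    ∃ e : Fin (Fintype.card ι) ≃ ι, Antitone (f ∘ e) :=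
  let e := (Fintype.equivFin ι).symm
  ⟨(Tuple.sort (OrderDual.toDual ∘ f ∘ e)).trans e,
    fun _ _ h => Tuple.monotone_sort (OrderDual.toDual ∘ f ∘ e) h⟩

theorem sum_mul_nonneg_of_antitone {R : Type*} [CommRing R] [PartialOrder R] [IsOrderedRing R]
    {n : ℕ} {x f : Fin n → R} (hf : Antitone f) (hf₀ : ∀ i, 0 ≤ f i)
    (hx : ∀ k, 0 ≤ ∑ i ∈ Iic k, x i) : 0 ≤ ∑ i, x i * f i := by
  induction n with
  | zero => simp
  | succ n ih =>
    have hinit : 0 ≤ ∑ i : Fin n, x i.castSucc * (f i.castSucc - f (Fin.last n)) := by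
      refine ih (fun i j hij => sub_le_sub_right (hf (Fin.castSucc_le_castSucc_iff.2 hij)) _)
        (fun i => sub_nonneg.2 (hf (Fin.le_last _))) fun k => ?_
      simpa only [← Fin.map_castSuccEmb_Iic, sum_map, Fin.coe_castSuccEmb] using hx k.castSucc
    have htotal : 0 ≤ (∑ i, x i) * f (Fin.last n) := by
      refine mul_nonneg ?_ (hf₀ _)
      simpa only [← Fin.top_eq_last, Iic_top] using hx (Fin.last n)
    calc 0 ≤ ∑ i : Fin n, x i.castSucc * (f i.castSucc - f (Fin.last n))
          + (∑ i, x i) * f (Fin.last n) := add_nonneg hinit htotal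
      _ = ∑ i, x i * f i := by
        simp only [Fin.sum_univ_castSucc, mul_sub, sum_sub_distrib, add_mul, sum_mul]
        ring

theorem sum_Iic_sqrt_succ_sub_sqrt {n : ℕ} (k : Fin n) :
    ∑ i ∈ Iic k, (√((i : ℝ) + 1) - √(i : ℝ)) = √((k : ℝ) + 1) := by
  have h := sum_range_sub (fun i : ℕ => √(i : ℝ)) (k + 1)
  rw [Nat.range_succ_eq_Iic, ← Fin.map_valEmbedding_Iic, sum_map] at h
  simpa using h

theorem harmonic_nonneg (n : ℕ) : 0 ≤ harmonic n := by
  rw [harmonic]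
  positivity

theorem sq_sqrt_succ_sub_sqrt_le (k : ℕ) : (√((k : ℝ) + 1) - √(k : ℝ)) ^ 2 ≤ ((k : ℝ) + 1)⁻¹ := by
  have hpos : 0 < √((k : ℝ) + 1) := Real.sqrt_pos.2 (by positivity)
  have hle : √(k : ℝ) ≤ √((k : ℝ) + 1) := Real.sqrt_le_sqrt (by linarith)
  have hsq : √((k : ℝ) + 1) ^ 2 = k + 1 := Real.sq_sqrt (by positivity)
  have hsq' : √(k : ℝ) ^ 2 = k := Real.sq_sqrt (by positivity)
  have hincr : √((k : ℝ) + 1) - √(k : ℝ) ≤ (√((k : ℝ) + 1))⁻¹ := by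
    rw [← one_div, le_div_iff₀ hpos]
    nlinarith [Real.sqrt_nonneg (k : ℝ)]
  calc (√((k : ℝ) + 1) - √(k : ℝ)) ^ 2 ≤ (√((k : ℝ) + 1))⁻¹ ^ 2 := by
        gcongr
    _ = ((k : ℝ) + 1)⁻¹ := by rw [inv_pow, hsq]

theorem sum_sqrt_succ_sub_sqrt_mul_le {n : ℕ} (g : Fin n → ℝ) :
    ∑ i : Fin n, (√((i : ℝ) + 1) - √(i : ℝ)) * g i ≤ √((harmonic n : ℝ) * ∑ i, g i ^ 2) := by
  have hsum : ∑ i : Fin n, (√((i : ℝ) + 1) - √(i : ℝ)) ^ 2 ≤ (harmonic n : ℝ) :=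
    calc ∑ i : Fin n, (√((i : ℝ) + 1) - √(i : ℝ)) ^ 2
        ≤ ∑ i : Fin n, ((i : ℝ) + 1)⁻¹ := sum_le_sum fun i _ => sq_sqrt_succ_sub_sqrt_le i
      _ = (harmonic n : ℝ) := by
        rw [harmonic, Fin.sum_univ_eq_sum_range fun i : ℕ => ((i : ℝ) + 1)⁻¹]
        push_cast
        rfl
  refine (Real.sum_mul_le_sqrt_mul_sqrt _ _ _).trans ?_
  rw [Real.sqrt_mul (Rat.cast_nonneg.2 (harmonic_nonneg n))]
  gcongr

end Rearrangement

section SmallSets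

open scoped Matrix

variable {ι κ : Type*}

theorem sum_mul_le_mul_sqrt_harmonic [Fintype ι] {c f : ι → ℝ} {b : ℝ} (hb : 0 ≤ b)
    (hf : ∀ v, 0 ≤ f v) (hc : ∀ S : Finset ι, ∑ v ∈ S, c v ≤ b * √(#S : ℝ)) :
    ∑ v, c v * f v ≤ b * √((harmonic (Fintype.card ι) : ℝ) * ∑ v, f v ^ 2) := by
  obtain ⟨e, he⟩ := exists_equiv_fin_antitone f
  have hpartial : ∀ k : Fin (Fintype.card ι),
      0 ≤ ∑ i ∈ Iic k, (b * (√((i : ℝ) + 1) - √(i : ℝ)) - c (e i)) := by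
    intro k
    have h := hc ((Iic k).map e.toEmbedding)
    rw [sum_map, card_map, Fin.card_Iic] at h
    rw [sum_sub_distrib, ← mul_sum, sum_Iic_sqrt_succ_sub_sqrt, sub_nonneg]
    exact_mod_cast h
  have habel : ∑ i, c (e i) * f (e i) ≤
      b * ∑ i : Fin (Fintype.card ι), (√((i : ℝ) + 1) - √(i : ℝ)) * f (e i) := by
    rw [← sub_nonneg, mul_sum, ← sum_sub_distrib]
    simpa only [Function.comp_apply, sub_mul, mul_assoc] using
      sum_mul_nonneg_of_antitone he (fun i => hf (e i)) hpartial
  rw [← e.sum_comp fun v => c v * f v, ← e.sum_comp fun v => f v ^ 2]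
  exact habel.trans (mul_le_mul_of_nonneg_left (sum_sqrt_succ_sub_sqrt_mul_le (f ∘ e)) hb)

theorem sum_le_of_forall_card_le_sum_le {c : ι → ℝ} {b : ℝ} {m : ℕ} (hm : 0 < m) (hb : 0 ≤ b)
    (hc : ∀ S : Finset ι, #S ≤ m → ∑ v ∈ S, c v ≤ b * √(#S : ℝ)) (S : Finset ι) :
    ∑ v ∈ S, c v ≤ b * (√(#S : ℝ) + #S / √(m : ℝ)) := by
  classical
  induction S using Finset.strongInduction with
  | H S ih =>
    by_cases hS : #S ≤ m
    · exact (hc S hS).trans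
        (mul_le_mul_of_nonneg_left (le_add_of_nonneg_right (by positivity)) hb)
    · obtain ⟨T, hTS, hT⟩ := exists_subset_card_eq (le_of_not_ge hS)
      have hrest := ih (S \ T) (sdiff_ssubset hTS (card_pos.1 (hT ▸ hm)))
      have hcard : (#(S \ T) : ℝ) = #S - m := by
        rw [card_sdiff_of_subset hTS, hT, Nat.cast_sub (le_of_not_ge hS)]
      have hsqrt : √((#S : ℝ) - m) ≤ √(#S : ℝ) := Real.sqrt_le_sqrt (by simp)
      rw [hcard] at hrest
      calc ∑ v ∈ S, c v = ∑ v ∈ S \ T, c v + ∑ v ∈ T, c v := (sum_sdiff hTS).symm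
        _ ≤ b * (√((#S : ℝ) - m) + (#S - m) / √(m : ℝ)) + b * √(m : ℝ) :=
          add_le_add hrest (hT ▸ hc T hT.le)
        _ = b * (√((#S : ℝ) - m) + #S / √(m : ℝ)) := by
          rw [sub_div, Real.div_sqrt]
          ring
        _ ≤ b * (√(#S : ℝ) + #S / √(m : ℝ)) := by gcongr

/-- The size of a nonnegative function `f` as seen by sets of at most `m` elements: up to a linear
term, `smallSetNorm m f` bounds the pairing of `f` with any function whose sum over each such set
`S` is at most `√#S`. It is only meant for `f ≥ 0`, so its `ℓ¹` part is written without absolute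
values. -/
noncomputable def smallSetNorm [Fintype ι] (m : ℕ) (f : ι → ℝ) : ℝ :=
  √((harmonic (Fintype.card ι) : ℝ) * ∑ v, f v ^ 2) + (∑ v, f v) / √(m : ℝ)

theorem smallSetNorm_nonneg [Fintype ι] (m : ℕ) {f : ι → ℝ} (hf : ∀ v, 0 ≤ f v) :
    0 ≤ smallSetNorm m f :=
  add_nonneg (Real.sqrt_nonneg _) (div_nonneg (sum_nonneg fun v _ => hf v) (Real.sqrt_nonneg _))

theorem sum_mul_le_mul_smallSetNorm [Fintype ι] {c f : ι → ℝ} {a b : ℝ} {m : ℕ} (hm : 0 < m)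
    (hb : 0 ≤ b) (hf : ∀ v, 0 ≤ f v)
    (hc : ∀ S : Finset ι, #S ≤ m → ∑ v ∈ S, c v ≤ a * #S + b * √(#S : ℝ)) :
    ∑ v, c v * f v ≤ a * ∑ v, f v + b * smallSetNorm m f := by
  have hall := sum_le_of_forall_card_le_sum_le (c := fun v => c v - a) hm hb fun S hS => by
    rw [sum_sub_distrib, sum_const, nsmul_eq_mul]
    linarith [hc S hS]
  have hpair := sum_mul_le_mul_sqrt_harmonic (c := fun v => c v - a - b / √(m : ℝ)) hb hf
    fun S => by
      rw [sum_sub_distrib, sum_const, nsmul_eq_mul]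
      exact sub_le_iff_le_add.2 ((hall S).trans_eq (by ring))
  simp only [sub_mul, sum_sub_distrib, ← mul_sum] at hpair
  rw [smallSetNorm, mul_add, ← mul_div_assoc, ← div_mul_eq_mul_div]
  linarith

theorem dotProduct_mulVec_le_mul_smallSetNorm [Fintype ι] [Fintype κ] {M : Matrix ι κ ℝ}
    {a b : ℝ} {m : ℕ} (hm : 0 < m) (hb : 0 ≤ b)
    (hM : ∀ (S : Finset ι) (T : Finset κ), #S ≤ m → #T ≤ m →
      ∑ u ∈ S, ∑ v ∈ T, M u v ≤ a * (#S * #T) + b * √(#S * #T : ℝ))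
    {f : ι → ℝ} {g : κ → ℝ} (hf : ∀ u, 0 ≤ f u) (hg : ∀ v, 0 ≤ g v) :
    f ⬝ᵥ M *ᵥ g ≤ a * ((∑ u, f u) * ∑ v, g v) + b * (smallSetNorm m f * smallSetNorm m g) := by
  have hrow : ∀ S : Finset ι, #S ≤ m → ∑ u ∈ S, (M *ᵥ g) u ≤
      (a * ∑ v, g v) * #S + (b * smallSetNorm m g) * √(#S : ℝ) := by
    intro S hS
    have hcol := sum_mul_le_mul_smallSetNorm (c := fun v => ∑ u ∈ S, M u v) (a := a * #S)
      (b := b * √(#S : ℝ)) hm (by positivity) hg fun T hT => by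
        rw [sum_comm]
        refine (hM S T hS hT).trans_eq ?_
        rw [Real.sqrt_mul (Nat.cast_nonneg _)]
        ring
    calc ∑ u ∈ S, (M *ᵥ g) u = ∑ v, (∑ u ∈ S, M u v) * g v := by
          simp only [Matrix.mulVec, dotProduct, sum_mul]
          exact sum_comm
      _ ≤ a * #S * ∑ v, g v + b * √(#S : ℝ) * smallSetNorm m g := hcol
      _ = _ := by ring
  rw [dotProduct_comm]
  refine (sum_mul_le_mul_smallSetNorm hm (mul_nonneg hb (smallSetNorm_nonneg m hg)) hf
    hrow).trans_eq ?_
  ring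

theorem sq_smallSetNorm_le_of_mem_stdSimplex [Fintype ι] (m : ℕ) {p : ι → ℝ}
    (hp : p ∈ stdSimplex ℝ ι) :
    smallSetNorm m p ^ 2 ≤ 2 * (harmonic (Fintype.card ι) * ∑ v, p v ^ 2 + 1 / m) := by
  have hharm : 0 ≤ (harmonic (Fintype.card ι) : ℝ) := Rat.cast_nonneg.2 (harmonic_nonneg _)
  refine add_sq_le.trans_eq ?_
  rw [hp.2, div_pow, Real.sq_sqrt (by positivity), Real.sq_sqrt (by positivity), one_pow]

/-- The small-set bipartite density condition for a weighted transition matrix `M` in place of the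
adjacency matrix of a graph: for the walk matrix of a `d`-regular graph, `β` is `α / d` and `m` is
the integer part of `δ n`. -/
def SmallSetDense [Fintype ι] (M : Matrix ι ι ℝ) (β : ℝ) (m : ℕ) : Prop :=
  ∀ S T : Finset ι, #S ≤ m → #T ≤ m →
    ∑ u ∈ S, ∑ v ∈ T, M u v ≤ #S * #T / Fintype.card ι + β * √(#S * #T : ℝ)

end SmallSets

section RealEstimates

theorem le_div_one_sub_add_pow_mul_of_le_add_mul {a : ℕ → ℝ} {K ε : ℝ} (hK : 0 ≤ K) (hε : 0 ≤ ε)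
    (hε₁ : ε < 1) (ha : ∀ k, a (k + 1) ≤ K + ε * a k) (t : ℕ) :
    a t ≤ K / (1 - ε) + ε ^ t * a 0 := by
  have hpos : 0 < 1 - ε := sub_pos.2 hε₁
  induction t with
  | zero => simpa using div_nonneg hK hpos.le
  | succ t ih =>
    calc a (t + 1) ≤ K + ε * (K / (1 - ε) + ε ^ t * a 0) := (ha t).trans (by gcongr)
      _ = K / (1 - ε) + ε ^ (t + 1) * a 0 := by
        field_simp
        ring

theorem le_one_div_four_of_pow_four_le {δ ε : ℝ} (hε4 : 256 * ε ^ 4 ≤ δ) (hδ₁ : δ ≤ 1) :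
    ε ≤ 1 / 4 :=
  le_of_pow_le_pow_left₀ (n := 4) (by norm_num) (by norm_num) (by linarith)

theorem four_mul_pow_four_div_le {δ ε : ℝ} (hε : 0 < ε) (hε4 : 256 * ε ^ 4 ≤ δ) (hδ₁ : δ ≤ 1) :
    4 * ε ^ 4 / δ ≤ (1 - δ) / 4 + ε := by
  have hδ : 0 < δ := lt_of_lt_of_le (by positivity) hε4
  have hε14 := le_one_div_four_of_pow_four_le hε4 hδ₁
  have hratio : 4 * ε ^ 4 / δ ≤ 1 / 4 := by
    rw [div_le_iff₀ hδ]
    linarith [pow_pos hε 4]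
  have hcube : 4 * ε ^ 4 ≤ ε :=
    calc 4 * ε ^ 4 = 4 * ε ^ 3 * ε := by ring
      _ ≤ 4 * (1 / 4) ^ 3 * ε := by gcongr
      _ ≤ ε := by linarith
  calc 4 * ε ^ 4 / δ = (1 - δ) * (4 * ε ^ 4 / δ) + 4 * ε ^ 4 := by
        field_simp
        ring
    _ ≤ (1 - δ) * (1 / 4) + ε := by gcongr
    _ = (1 - δ) / 4 + ε := by ring

theorem half_le_natFloor {x : ℝ} (hx : 1 ≤ x) : x / 2 ≤ ⌊x⌋₊ := by
  have hfloor : (1 : ℝ) ≤ ⌊x⌋₊ := by exact_mod_cast Nat.floor_pos.2 hx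
  linarith [Nat.lt_floor_add_one x]

theorem sum_sq_le_one_of_mem_stdSimplex {ι : Type*} [Fintype ι] {p : ι → ℝ}
    (hp : p ∈ stdSimplex ℝ ι) : ∑ v, p v ^ 2 ≤ 1 :=
  (sum_sq_le_sq_sum_of_nonneg fun v _ => hp.1 v).trans_eq (by rw [hp.2, one_pow])

end RealEstimates

section DoublyStochastic

open scoped Matrix

variable {ι : Type*} [Fintype ι] [DecidableEq ι] {M : Matrix ι ι ℝ}

theorem sum_sq_mulVec_le_of_mem_doublyStochastic (hM : M ∈ doublyStochastic ℝ ι) (p : ι → ℝ) :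
    ∑ u, (M *ᵥ p) u ^ 2 ≤ ∑ v, p v ^ 2 :=
  calc ∑ u, (M *ᵥ p) u ^ 2 ≤ ∑ u, (M *ᵥ fun v => p v ^ 2) u :=
        sum_le_sum fun u _ => Real.pow_arith_mean_le_arith_mean_pow_of_even univ (M u) p
          (fun _ _ => nonneg_of_mem_doublyStochastic hM) (sum_row_of_mem_doublyStochastic hM u)
          even_two
    _ = ∑ v, p v ^ 2 := sum_mulVec_of_mem_doublyStochastic hM

theorem mulVec_mem_stdSimplex_of_mem_doublyStochastic (hM : M ∈ doublyStochastic ℝ ι) {p : ι → ℝ}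
    (hp : p ∈ stdSimplex ℝ ι) : M *ᵥ p ∈ stdSimplex ℝ ι :=
  ⟨fun _ => sum_nonneg fun v _ => mul_nonneg (nonneg_of_mem_doublyStochastic hM) (hp.1 v),
    (sum_mulVec_of_mem_doublyStochastic hM).trans hp.2⟩

theorem smallSetNorm_mulVec_le_of_mem_doublyStochastic (hM : M ∈ doublyStochastic ℝ ι) (m : ℕ)
    (p : ι → ℝ) : smallSetNorm m (M *ᵥ p) ≤ smallSetNorm m p := by
  have hharm : 0 ≤ (harmonic (Fintype.card ι) : ℝ) := Rat.cast_nonneg.2 (harmonic_nonneg _)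
  rw [smallSetNorm, smallSetNorm, sum_mulVec_of_mem_doublyStochastic hM]
  have hsq := sum_sq_mulVec_le_of_mem_doublyStochastic hM p
  gcongr √(_ * ?_) + _

theorem SmallSetDense.sum_sq_mulVec_le {β : ℝ} {m : ℕ} (hdens : SmallSetDense M β m)
    (hM : M ∈ doublyStochastic ℝ ι) (hm : 0 < m) (hβ : 0 ≤ β) {p : ι → ℝ}
    (hp : p ∈ stdSimplex ℝ ι) :
    ∑ u, (M *ᵥ p) u ^ 2 ≤
      1 / Fintype.card ι + 2 * β * (harmonic (Fintype.card ι) * ∑ v, p v ^ 2 + 1 / m) := by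
  have hq := mulVec_mem_stdSimplex_of_mem_doublyStochastic hM hp
  calc ∑ u, (M *ᵥ p) u ^ 2 = (M *ᵥ p) ⬝ᵥ (M *ᵥ p) := by simp only [dotProduct, sq]
    _ ≤ 1 / Fintype.card ι * ((∑ u, (M *ᵥ p) u) * ∑ v, p v)
          + β * (smallSetNorm m (M *ᵥ p) * smallSetNorm m p) :=
      dotProduct_mulVec_le_mul_smallSetNorm hm hβ
        (fun S T hS hT => (hdens S T hS hT).trans_eq (by ring)) hq.1 hp.1
    _ = 1 / Fintype.card ι + β * (smallSetNorm m (M *ᵥ p) * smallSetNorm m p) := by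
      rw [hq.2, hp.2, mul_one, mul_one]
    _ ≤ 1 / Fintype.card ι + β * smallSetNorm m p ^ 2 := by
      rw [sq]
      gcongr
      · exact smallSetNorm_nonneg m hp.1
      · exact smallSetNorm_mulVec_le_of_mem_doublyStochastic hM m p
    _ ≤ 1 / Fintype.card ι
          + β * (2 * (harmonic (Fintype.card ι) * ∑ v, p v ^ 2 + 1 / m)) := by
      gcongr
      exact sq_smallSetNorm_le_of_mem_stdSimplex m hp
    _ = _ := by ring

theorem sum_sq_pow_mulVec_le_of_mem_doublyStochastic {K ε : ℝ} (hM : M ∈ doublyStochastic ℝ ι)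
    (hK : 0 ≤ K) (hε : 0 ≤ ε) (hε₁ : ε < 1)
    (hstep : ∀ p ∈ stdSimplex ℝ ι, ∑ u, (M *ᵥ p) u ^ 2 ≤ K + ε * ∑ v, p v ^ 2)
    {p : ι → ℝ} (hp : p ∈ stdSimplex ℝ ι) (t : ℕ) :
    ∑ u, ((M ^ t) *ᵥ p) u ^ 2 ≤ K / (1 - ε) + ε ^ t := by
  have hiter := le_div_one_sub_add_pow_mul_of_le_add_mul
    (a := fun k => ∑ u, ((M ^ k) *ᵥ p) u ^ 2) hK hε hε₁ (fun k => by
      rw [pow_succ', ← Matrix.mulVec_mulVec]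
      exact hstep _ (mulVec_mem_stdSimplex_of_mem_doublyStochastic (pow_mem hM k) hp)) t
  refine hiter.trans (add_le_add_right (mul_le_of_le_one_right (pow_nonneg hε t) ?_) _)
  simpa only [pow_zero, Matrix.one_mulVec] using sum_sq_le_one_of_mem_stdSimplex hp

theorem SmallSetDense.sum_sq_mulVec_le_of_pow_four {δ ε : ℝ}
    (hdens : SmallSetDense M (ε ^ 4) ⌊δ * Fintype.card ι⌋₊) (hM : M ∈ doublyStochastic ℝ ι)
    (hε : 0 < ε) (hε4 : 256 * ε ^ 4 ≤ δ) (hεH : ε ^ 2 * harmonic (Fintype.card ι) ≤ 2)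
    (hδ₁ : δ ≤ 1) (hδn : 1 ≤ δ * Fintype.card ι) {p : ι → ℝ} (hp : p ∈ stdSimplex ℝ ι) :
    ∑ u, (M *ᵥ p) u ^ 2 ≤
      (δ + 5 / 4 * (1 - δ) + ε) / Fintype.card ι + ε * ∑ v, p v ^ 2 := by
  set n : ℝ := (Fintype.card ι : ℝ)
  set m := ⌊δ * n⌋₊
  set H : ℝ := (harmonic (Fintype.card ι) : ℝ)
  have hε14 := le_one_div_four_of_pow_four_le hε4 hδ₁
  have hδ : 0 < δ := lt_of_lt_of_le (by positivity) hε4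
  have hm : δ * n / 2 ≤ m := half_le_natFloor hδn
  have hmain : 2 * ε ^ 4 * H ≤ ε :=
    calc 2 * ε ^ 4 * H = 2 * ε ^ 2 * (ε ^ 2 * H) := by ring
      _ ≤ 2 * ε ^ 2 * 2 := by gcongr
      _ = 4 * ε * ε := by ring
      _ ≤ 4 * (1 / 4) * ε := by gcongr
      _ = ε := by ring
  have herror : 2 * ε ^ 4 * (1 / m) ≤ ((1 - δ) / 4 + ε) / n :=
    calc 2 * ε ^ 4 * (1 / m) ≤ 2 * ε ^ 4 * (1 / (δ * n / 2)) := by gcongr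
      _ = 4 * ε ^ 4 / δ / n := by
        field_simp
        ring
      _ ≤ ((1 - δ) / 4 + ε) / n := by
        gcongr
        exact four_mul_pow_four_div_le hε hε4 hδ₁
  calc ∑ u, (M *ᵥ p) u ^ 2 ≤ 1 / n + 2 * ε ^ 4 * (H * ∑ v, p v ^ 2 + 1 / m) :=
        hdens.sum_sq_mulVec_le hM (Nat.floor_pos.2 hδn) (by positivity) hp
    _ = 1 / n + 2 * ε ^ 4 * H * ∑ v, p v ^ 2 + 2 * ε ^ 4 * (1 / m) := by ring
    _ ≤ 1 / n + ε * ∑ v, p v ^ 2 + ((1 - δ) / 4 + ε) / n := by gcongr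
    _ = (δ + 5 / 4 * (1 - δ) + ε) / n + ε * ∑ v, p v ^ 2 := by ring

theorem SmallSetDense.sum_sq_pow_mulVec_le {δ ε : ℝ}
    (hdens : SmallSetDense M (ε ^ 4) ⌊δ * Fintype.card ι⌋₊) (hM : M ∈ doublyStochastic ℝ ι)
    (hε : 0 < ε) (hε4 : 256 * ε ^ 4 ≤ δ) (hεH : ε ^ 2 * harmonic (Fintype.card ι) ≤ 2)
    (hδ₁ : δ ≤ 1) (hδn : 1 ≤ δ * Fintype.card ι) {p : ι → ℝ} (hp : p ∈ stdSimplex ℝ ι) (t : ℕ) :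
    ∑ u, ((M ^ t) *ᵥ p) u ^ 2 ≤
      (δ + 5 / 4 * (1 - δ) + 3 * ε) / Fintype.card ι + ε ^ t := by
  have hε14 := le_one_div_four_of_pow_four_le hε4 hδ₁
  have hC : 0 ≤ δ + 5 / 4 * (1 - δ) := by linarith
  have hC' : δ + 5 / 4 * (1 - δ) ≤ 5 / 4 := by linarith [pow_pos hε 4]
  have hgeom : (δ + 5 / 4 * (1 - δ) + ε) / (1 - ε) ≤ δ + 5 / 4 * (1 - δ) + 3 * ε := by
    rw [div_le_iff₀ (by linarith)]
    nlinarith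
  refine (sum_sq_pow_mulVec_le_of_mem_doublyStochastic hM (by positivity) hε.le (by linarith)
    (fun q hq => hdens.sum_sq_mulVec_le_of_pow_four hM hε hε4 hεH hδ₁ hδn hq) hp t).trans ?_
  rw [div_right_comm]
  gcongr

end DoublyStochastic

section Exponents

theorem rpow_neg_one_sub_log_div_log_mul_pow_four {N D α ξ : ℝ} (hN : 0 < N) (hα : 0 < α)
    (hD : D = N ^ ξ) (hlogD : Real.log D ≠ 0) :
    (N ^ (-((1 - Real.log α / Real.log D) * ξ / 4))) ^ 4 = α / D := by
  have hDpos : 0 < D := hD ▸ Real.rpow_pos_of_pos hN ξ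
  have hlog : Real.log D = ξ * Real.log N := by rw [hD, Real.log_rpow hN]
  rw [← Real.rpow_mul_natCast hN.le, Real.rpow_def_of_pos hN,
    ← Real.exp_log (div_pos hα hDpos), Real.log_div hα.ne' hDpos.ne']
  congr 1
  calc Real.log N * (-((1 - Real.log α / Real.log D) * ξ / 4) * (4 : ℕ))
      = -(1 - Real.log α / Real.log D) * (ξ * Real.log N) := by
        push_cast
        ring
    _ = Real.log α - Real.log D := by
      rw [← hlog]
      field_simp
      ring

theorem one_sub_log_div_log_pos {a b : ℝ} (ha : 1 ≤ a) (hab : a < b) :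
    0 < 1 - Real.log a / Real.log b :=
  sub_pos.2 ((div_lt_one (Real.log_pos (ha.trans_lt hab))).2
    (Real.log_lt_log (zero_lt_one.trans_le ha) hab))

theorem div_rpow_one_add {N : ℝ} (hN : 0 < N) (C κ : ℝ) :
    C / N ^ (1 + κ) = C * N ^ (-κ) / N := by
  rw [Real.rpow_add hN, Real.rpow_one, Real.rpow_neg hN.le]
  field_simp

theorem rpow_neg_pow_le_div {N κ : ℝ} {t : ℕ} (hN : 1 ≤ N) (hκ : 0 < κ) (ht : 1 / κ + 1 ≤ t) :
    (N ^ (-κ)) ^ t ≤ N ^ (-κ) / N := by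
  have hexp : 1 + κ ≤ κ * t :=
    calc 1 + κ = κ * (1 / κ + 1) := by field_simp
      _ ≤ κ * t := by gcongr
  calc (N ^ (-κ)) ^ t = N ^ (-κ * t) := (Real.rpow_mul_natCast (by linarith) _ _).symm
    _ ≤ N ^ (-κ - 1) := Real.rpow_le_rpow_of_exponent_le hN (by linarith)
    _ = N ^ (-κ) / N := Real.rpow_sub_one (by linarith) _

theorem sq_mul_harmonic_le_two {n : ℕ} {ε : ℝ} (hε : ε ^ 4 ≤ 1)
    (hεlog : ε ^ 4 * Real.log n ^ 2 ≤ 1) : ε ^ 2 * harmonic n ≤ 2 := by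
  have hε2 : ε ^ 2 ≤ 1 := (sq_le_one_iff₀ (sq_nonneg ε)).1 (by linarith [pow_mul ε 2 2])
  have hlog : ε ^ 2 * Real.log n ≤ 1 := by
    refine le_of_pow_le_pow_left₀ two_ne_zero zero_le_one ?_
    rwa [mul_pow, ← pow_mul, one_pow]
  calc ε ^ 2 * harmonic n ≤ ε ^ 2 * (1 + Real.log n) := by
        gcongr
        exact harmonic_le_one_add_log n
    _ ≤ 2 := by linarith

theorem div_mul_sq_log_le_one {N D α ξ : ℝ} (hN : 0 < N) (hD : D = N ^ ξ)
    (hlogD : Real.log D ≠ 0) (hα : α ≤ ξ ^ 2 * D / Real.log D ^ 2) :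
    α / D * Real.log N ^ 2 ≤ 1 := by
  have hDpos : 0 < D := hD ▸ Real.rpow_pos_of_pos hN ξ
  have hlog : Real.log D = ξ * Real.log N := by rw [hD, Real.log_rpow hN]
  rw [hlog] at hα hlogD
  have hξ : ξ ≠ 0 := left_ne_zero_of_mul hlogD
  have hlogN : 0 < Real.log N ^ 2 := pow_two_pos_of_ne_zero (right_ne_zero_of_mul hlogD)
  rw [mul_pow, mul_div_mul_left _ _ (pow_ne_zero 2 hξ), le_div_iff₀ hlogN] at hα
  rw [div_mul_eq_mul_div]
  exact (div_le_one hDpos).2 hα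

theorem one_lt_of_sqrt_lt_of_le {x a : ℝ} (hxa : √x < a) (hax : a ≤ x) : 1 < a := by
  nlinarith [Real.lt_sq_of_sqrt_lt hxa, Real.sqrt_nonneg x]

end Exponents

section Walk

variable {n d : ℕ} {G : SimpleGraph (Fin n)} [DecidableRel G.Adj]

theorem walkMatrix_apply (u v : Fin n) :
    walkMatrix G d u v = (d : ℝ)⁻¹ * if G.Adj u v then 1 else 0 := by
  simp [walkMatrix, SimpleGraph.adjMatrix_apply]

theorem walkMatrix_mem_doublyStochastic (hG : G.IsRegularOfDegree d) (hd : d ≠ 0) :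
    walkMatrix G d ∈ doublyStochastic ℝ (Fin n) := by
  have hrow : ∀ u, ∑ v, walkMatrix G d u v = 1 := by
    intro u
    simp only [walkMatrix_apply, ← mul_sum, sum_boole, ← SimpleGraph.neighborFinset_eq_filter,
      SimpleGraph.card_neighborFinset_eq_degree, hG u]
    exact inv_mul_cancel₀ (Nat.cast_ne_zero.2 hd)
  refine mem_doublyStochastic_iff_sum.2 ⟨fun u v => ?_, hrow, fun v => ?_⟩
  · rw [walkMatrix_apply]
    positivity
  · simpa only [walkMatrix_apply, G.adj_comm] using hrow v

theorem sum_sum_walkMatrix (S T : Finset (Fin n)) :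
    ∑ u ∈ S, ∑ v ∈ T, walkMatrix G d u v = bipCount G S T / d := by
  rw [← sum_product' S T fun u v => walkMatrix G d u v]
  simp only [walkMatrix_apply, ← mul_sum, sum_boole]
  exact inv_mul_eq_div _ _

theorem SmallSetBipDensity.smallSetDense_walkMatrix {α δ : ℝ} (h : SmallSetBipDensity G d α δ)
    (hd : d ≠ 0) (hδn : 0 ≤ δ * n) : SmallSetDense (walkMatrix G d) (α / d) ⌊δ * n⌋₊ := by
  intro S T hS hT
  have hd' : (0 : ℝ) < d := by positivity
  rw [sum_sum_walkMatrix, Fintype.card_fin, div_le_iff₀ hd']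
  refine (h S T ((Nat.le_floor_iff hδn).1 hS) ((Nat.le_floor_iff hδn).1 hT)).trans_eq ?_
  field_simp

theorem degree_le_of_isRegularOfDegree (hG : G.IsRegularOfDegree d) (hn : 0 < n) : d ≤ n := by
  simpa only [hG.degree_eq, Fintype.card_fin] using (G.degree_lt_card_verts ⟨0, hn⟩).le

theorem SmallSetBipDensity.sum_sq_pow_walkMatrix_mulVec_le {α δ ε : ℝ}
    (hdens : SmallSetBipDensity G d α δ) (hG : G.IsRegularOfDegree d) (hd : d ≠ 0) (hn : 0 < n)
    (hα : 1 ≤ α) (hδ₁ : δ ≤ 1) (hδα : 256 * α / d ≤ δ) (hε : 0 < ε) (hε4 : ε ^ 4 = α / d)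
    (hεH : ε ^ 2 * harmonic n ≤ 2) {p : Fin n → ℝ} (hp : IsProbDist p) (t : ℕ) :
    ∑ v, ((walkMatrix G d ^ t).mulVec p v) ^ 2 ≤
      (δ + 5 / 4 * (1 - δ) + 3 * ε) / n + ε ^ t := by
  have hδn : 1 ≤ δ * n := by
    have hd₀ : (0 : ℝ) < d := by positivity
    have hδ : 0 ≤ δ := hδα.trans' (by positivity)
    have hdn : (d : ℝ) ≤ n := by exact_mod_cast degree_le_of_isRegularOfDegree hG hn
    calc (1 : ℝ) ≤ 256 * α := by linarith
      _ ≤ δ * d := (div_le_iff₀ hd₀).1 hδα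
      _ ≤ δ * n := by gcongr
  have hwalk : SmallSetDense (walkMatrix G d) (ε ^ 4) ⌊δ * Fintype.card (Fin n)⌋₊ := by
    rw [hε4, Fintype.card_fin]
    exact hdens.smallSetDense_walkMatrix hd (by linarith)
  simpa only [Fintype.card_fin] using
    hwalk.sum_sq_pow_mulVec_le (walkMatrix_mem_doublyStochastic hG hd) hε
      (by rwa [hε4, ← mul_div_assoc]) (by rwa [Fintype.card_fin]) hδ₁ (by rwa [Fintype.card_fin])
      hp t

end Walk

theorem two_norm_after_many_steps_of_small_set_bipartite_density_general
    {ξ : ℝ} {n d : ℕ} {G : SimpleGraph (Fin n)} [DecidableRel G.Adj] {α δ : ℝ}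
    (hξ : 0 < ξ) (hG : G.IsRegularOfDegree d) (hd : (d : ℝ) = (n : ℝ) ^ ξ) (hα : 1 ≤ α)
    (hαlog : α ≤ ξ ^ 2 * d / Real.log d ^ 2) (hδ₁ : δ ≤ 1) (hδα : 256 * α / d ≤ δ)
    (hdens : SmallSetBipDensity G d α δ) {p₀ : Fin n → ℝ} (hp₀ : IsProbDist p₀) {t : ℕ}
    (ht : 4 / ((1 - Real.log α / Real.log d) * ξ) + 1 ≤ (t : ℝ)) :
    ∑ v, ((walkMatrix G d ^ t).mulVec p₀ v) ^ 2 ≤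
      (δ + (5 / 4) * (1 - δ)) / n +
        4 / (n : ℝ) ^ (1 + (1 - Real.log α / Real.log d) * ξ / 4) := by
  have hn : 0 < n := Nat.pos_of_ne_zero fun h => by
    subst h
    simpa using hp₀.2
  have hn₁ : (1 : ℝ) ≤ n := by exact_mod_cast hn
  have hn₀ : (0 : ℝ) < n := by linarith
  have hd₀ : (0 : ℝ) < d := hd ▸ Real.rpow_pos_of_pos hn₀ ξ
  have hαd : α < d := by
    have h256 := (div_le_iff₀ hd₀).1 (hδα.trans hδ₁)
    linarith
  have hlogd : Real.log d ≠ 0 := (Real.log_pos (hα.trans_lt hαd)).ne'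
  set κ : ℝ := (1 - Real.log α / Real.log d) * ξ / 4 with hκ
  have hκ₀ : 0 < κ := by
    have hc := one_sub_log_div_log_pos hα hαd
    positivity
  set ε : ℝ := (n : ℝ) ^ (-κ)
  have hε4 : ε ^ 4 = α / d :=
    rpow_neg_one_sub_log_div_log_mul_pow_four hn₀ (by linarith) hd hlogd
  have hεH : ε ^ 2 * harmonic n ≤ 2 :=
    sq_mul_harmonic_le_two (hε4 ▸ (div_le_one hd₀).2 hαd.le)
      (hε4 ▸ div_mul_sq_log_le_one hn₀ hd hlogd hαlog)
  have hεt : ε ^ t ≤ ε / n := rpow_neg_pow_le_div hn₁ hκ₀ (by rwa [hκ, one_div_div])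
  calc ∑ v, ((walkMatrix G d ^ t).mulVec p₀ v) ^ 2
      ≤ (δ + 5 / 4 * (1 - δ) + 3 * ε) / n + ε ^ t :=
        hdens.sum_sq_pow_walkMatrix_mulVec_le hG (by exact_mod_cast hd₀.ne') hn hα hδ₁ hδα
          (Real.rpow_pos_of_pos hn₀ _) hε4 hεH hp₀ t
    _ ≤ (δ + 5 / 4 * (1 - δ) + 3 * ε) / n + ε / n := by gcongr
    _ = (δ + 5 / 4 * (1 - δ)) / n + 4 / (n : ℝ) ^ (1 + κ) := by
      rw [div_rpow_one_add hn₀]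
      ring

/-- after `t ≥ 4/(cξ) + 1` steps the squared 2-norm drops to
about `C_δ/n`. -/
theorem two_norm_after_many_steps_of_small_set_bipartite_density :
    ∃ C₀ C₁ : ℝ, 0 < C₀ ∧ 0 < C₁ ∧
      ∀ (ξ : ℝ) (n d : ℕ) (G : SimpleGraph (Fin n)) [DecidableRel G.Adj] (α δ : ℝ),
        0 < ξ → ξ ≤ 1 →
        G.IsRegularOfDegree d →
        (d : ℝ) = (n : ℝ) ^ ξ →
        Real.sqrt d < α → α ≤ d →
        α ≤ ξ ^ 2 * d / Real.log d ^ 2 →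
        0 < δ → δ ≤ 1 → C₀ * α / d ≤ δ →
        SmallSetBipDensity G d α δ →
        ∀ p₀ : Fin n → ℝ, IsProbDist p₀ →
          ∀ t : ℕ, 4 / ((1 - Real.log α / Real.log d) * ξ) + 1 ≤ (t : ℝ) →
            ∑ v, ((walkMatrix G d ^ t).mulVec p₀ v) ^ 2 ≤
              (δ + (5 / 4) * (1 - δ)) / n +
                C₁ / (n : ℝ) ^ (1 + (1 - Real.log α / Real.log d) * ξ / 4) := by
  refine ⟨256, 4, by norm_num, by norm_num, fun ξ n d G _ α δ hξ _ hG hd hα hαd hαlog _ hδ₁ hδα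
    hdens p₀ hp₀ t ht => ?_⟩
  exact two_norm_after_many_steps_of_small_set_bipartite_density_general hξ hG hd
    (one_lt_of_sqrt_lt_of_le hα hαd).le hαlog hδ₁ hδα hdens hp₀ ht
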